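/- (Proposition 1.) Let V be a finite vertex type, G a connected simple graph on V, and s : V → V → ℝ a score function. Let u₁,…,uₙ : V be training child nodes with corresponding parent sets H(uᵢ) ⊆ V and designated true parents vᵢ ∈ H(uᵢ), for i = 1,…,n. Define the minimum-margin training loss L = ∑_{i=1}^{n} ∑_{v' ∈ V \ H(uᵢ)} max 0 (s uᵢ v' − s uᵢ vᵢ + (G.dist vᵢ v' : ℝ)). Let v̂ᵢ : V be top-ranked predicted parents, i.e. s uᵢ w ≤ s uᵢ v̂ᵢ for all w : V, and assume that for each i either v̂ᵢ = vᵢ or v̂ᵢ ∉ H(uᵢ). Then the average graph distance between true and top-ranked predicted parents is bounded by the average training loss: (1/n) ∑_{i=1}^{n} (G.dist vᵢ v̂ᵢ : ℝ) ≤ L / n. -/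

import Mathlib

open Finset in
/-- Proposition 1: the average graph distance between true and top-ranked predicted
parents of the training child nodes is bounded above by the average minimum-margin
training loss with knowledge-graph-aware margins. -/
theorem avg_dist_le_avg_loss {V : Type*} [Fintype V] [DecidableEq V]
    (G : SimpleGraph V) (hG : G.Connected) (s : V → V → ℝ) (n : ℕ) (hn : 1 ≤ n)
    (u v vhat : Fin n → V) (H : Fin n → Finset V)
    (hparent : ∀ i, v i ∈ H i)
    (htop : ∀ i, ∀ w : V, s (u i) w ≤ s (u i) (vhat i))
    (hpred : ∀ i, vhat i = v i ∨ vhat i ∉ H i) :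
    (1 / n : ℝ) * ∑ i : Fin n, (G.dist (v i) (vhat i) : ℝ) ≤
      (∑ i : Fin n, ∑ v' ∈ Finset.univ \ H i,
        max 0 (s (u i) v' - s (u i) (v i) + (G.dist (v i) v' : ℝ))) / n := by
  rw [one_div, inv_mul_eq_div]
  refine div_le_div_of_nonneg_right (Finset.sum_le_sum fun i _ => ?_) (Nat.cast_nonneg n)
  have hnn : ∀ v' ∈ Finset.univ \ H i,
      0 ≤ max 0 (s (u i) v' - s (u i) (v i) + (G.dist (v i) v' : ℝ)) :=
    fun _ _ => le_max_left _ _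
  rcases hpred i with h | h
  · rw [h, SimpleGraph.dist_self, Nat.cast_zero]
    exact Finset.sum_nonneg hnn
  · have hmem : vhat i ∈ Finset.univ \ H i := by simp [h]
    refine le_trans ?_ (Finset.single_le_sum hnn hmem)
    refine le_trans ?_ (le_max_right _ _)
    linarith [htop i (v i)]
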